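/- For every τ in the complex upper half-plane, η(τ)²·η(2τ)·η(4τ)·η(8τ)² = (1/2) · ∑_{(k,m) ∈ ℤ²} (k² − 2m²) · e^{2πiτ(k² + 2m²)}, where η is the Dedekind eta function and the double sum converges absolutely. -/

import Mathlib

/-!
With `q = e^{2πiτ}` and `φ(q) = ∑ q^(k²)` (`theta`), the double series is the Wronskian
`Dφ(q) · φ(q²) - φ(q) · D(φ(q²))` for the derivation `D = q d/dq`. Put `A = φ(q)`, `B = φ(-q)`.
Summing over pairs of integers according to the parity of their sum gives
`A² + B² = 2 φ(q²)²`, `A B = φ(-q²)²` and `A² - B² = 2 q (∑ q^(2(k² + k)))²`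
(`theta_sq_add`, `theta_mul_neg`, `theta_sq_sub`).

The first relation expresses the Wronskian through `D log (A / B)`, so the main point is the classical
identity `D log (A / B) = (A⁴ - B⁴) / 4` (`mul_logDer_eq`). By the first two relations, which are a step
of the arithmetic-geometric mean, both sides are multiplied by the same factor
`(A² - B²) / (4 (A² + B²))` when `q` is replaced by `q²` (`ratio_sq`). Their ratio at `q` thus equals
their ratio at `q^(2^n)` for every `n`, which tends to `1` because both sides are `4 q + o(q)` at `0`.

The Wronskian is therefore a product of theta values (`wronskian_eq`), and the product formulas of Gauss for
`φ(-q)` and `∑ q^(k² + k)` (`theta_neg_eq`, `psi_eq`) turn it into the eta product. These are cases of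
the Jacobi triple product (`jacobi_triple`), proved as the limit of its finite version. They also
provide the nonvanishing of all theta values that are divided by.
-/

open scoped Real

/-- The Dedekind eta function `η(τ) = e^{πiτ/12}·∏_{n≥1}(1 - e^{2πinτ})`. -/
noncomputable def dedekindEta (τ : ℂ) : ℂ :=
  Complex.exp (π * Complex.I * τ / 12) *
    ∏' n : ℕ, (1 - Complex.exp (2 * π * Complex.I * (n + 1) * τ))

open Filter Topology

/-! ### The Jacobi triple product -/

/-- The finite `q`-Pochhammer symbol `(x; x)_m = ∏_{i=1}^m (1 - x^i)`. -/
noncomputable def qPoch (x : ℂ) (m : ℕ) : ℂ := ∏ i ∈ Finset.range m, (1 - x ^ (i + 1))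

/-- The reciprocal `1 / (x; x)_m`, extended by `0` to negative `m`. With this convention the
recurrence `qPochInv_sub_one` holds at every integer, so that sums of `q`-binomial coefficients can
be taken over all of `ℤ` without boundary terms. -/
noncomputable def qPochInv (x : ℂ) (m : ℤ) : ℂ := if m < 0 then 0 else (qPoch x m.toNat)⁻¹

/-- The Euler product `(x; x)_∞ = ∏_{n ≥ 1} (1 - x^n)`, the eta function without its prefactor. -/
noncomputable def eulerProd (x : ℂ) : ℂ := ∏' n : ℕ, (1 - x ^ (n + 1))

lemma one_sub_pow_ne_zero {x : ℂ} (hx : ‖x‖ < 1) (n : ℕ) : 1 - x ^ (n + 1) ≠ 0 := by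
  intro h
  have h1 : ‖x ^ (n + 1)‖ < 1 := by
    rw [norm_pow]; exact pow_lt_one₀ (norm_nonneg _) hx (by omega)
  rw [← sub_eq_zero.mp h] at h1
  simp at h1

lemma qPoch_ne_zero {x : ℂ} (hx : ‖x‖ < 1) (m : ℕ) : qPoch x m ≠ 0 :=
  Finset.prod_ne_zero_iff.mpr fun i _ => one_sub_pow_ne_zero hx i

lemma eulerProd_ne_zero {x : ℂ} (hx : ‖x‖ < 1) : eulerProd x ≠ 0 := by
  have := tprod_one_add_ne_zero_of_summable (f := fun n : ℕ => -x ^ (n + 1))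
    (fun i => by simpa [← sub_eq_add_neg] using one_sub_pow_ne_zero hx i)
    (by simpa using (summable_nat_add_iff 1).mpr (summable_geometric_of_lt_one (norm_nonneg _) hx))
  simpa [eulerProd, sub_eq_add_neg] using this

lemma tendsto_qPoch {x : ℂ} (hx : ‖x‖ < 1) :
    Tendsto (qPoch x) atTop (𝓝 (eulerProd x)) :=
  (ModularForm.multipliable_one_sub_pow hx).hasProd.tendsto_prod_nat

lemma qPochInv_sub_one {x : ℂ} (hx : ‖x‖ < 1) (m : ℤ) :
    qPochInv x (m - 1) = (1 - x ^ m) * qPochInv x m := by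
  rcases lt_trichotomy m 0 with h | rfl | h
  · simp [qPochInv, h, show m - 1 < 0 by omega]
  · simp [qPochInv]
  · obtain ⟨n, rfl⟩ : ∃ n : ℕ, m = n + 1 := ⟨(m - 1).toNat, by omega⟩
    have h1 := qPoch_ne_zero hx n
    have h2 := one_sub_pow_ne_zero hx n
    have h3 : ((n : ℤ) + 1).toNat = n + 1 := by omega
    have h4 : x ^ ((n : ℤ) + 1) = x ^ (n + 1) := by norm_cast
    rw [h4]
    simp only [qPochInv, add_sub_cancel_right, Int.toNat_natCast, h3,
      show ¬ ((n : ℤ) < 0) by omega, show ¬ ((n : ℤ) + 1 < 0) by omega, if_false]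
    rw [show qPoch x (n + 1) = qPoch x n * (1 - x ^ (n + 1)) from Finset.prod_range_succ _ _]
    field_simp

lemma tendsto_qPochInv {x : ℂ} (hx : ‖x‖ < 1) :
    Tendsto (qPochInv x) atTop (𝓝 (eulerProd x)⁻¹) := by
  have ht : Tendsto Int.toNat atTop atTop :=
    tendsto_atTop.mpr fun b => (eventually_ge_atTop (b : ℤ)).mono fun m hm => by omega
  refine (((tendsto_qPoch hx).inv₀ (eulerProd_ne_zero hx)).comp ht).congr' ?_
  filter_upwards [eventually_ge_atTop (0 : ℤ)] with m hm
  simp [qPochInv, not_lt.mpr hm]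

lemma exists_bound_qPochInv {x : ℂ} (hx : ‖x‖ < 1) : ∃ C, ∀ m, ‖qPochInv x m‖ ≤ C := by
  obtain ⟨C, hC⟩ := (Metric.isBounded_range_of_tendsto _
    ((tendsto_qPoch hx).inv₀ (eulerProd_ne_zero hx))).exists_norm_le
  refine ⟨C, fun m => ?_⟩
  have h := fun n => hC _ ⟨n, rfl⟩
  unfold qPochInv
  split_ifs
  · simpa using (norm_nonneg _).trans (h 0)
  · exact h _

/-- The finite form of the triple product: the coefficient of `z ^ k` is `q ^ (k²)` times the Gaussian
binomial coefficient `[2n choose n + k]` in base `q²`. -/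
lemma hasSum_finite_triple {q : ℂ} (hq : ‖q‖ < 1) (hq0 : q ≠ 0) {z : ℂ} (hz : z ≠ 0) (n : ℕ) :
    HasSum (fun k : ℤ => qPoch (q ^ 2) (2 * n) * (qPochInv (q ^ 2) (n - k) *
        qPochInv (q ^ 2) (n + k)) * (q ^ (k ^ 2) * z ^ k))
      (∏ j ∈ Finset.range n, ((1 + z * q ^ (2 * j + 1)) * (1 + z⁻¹ * q ^ (2 * j + 1)))) := by
  have hx : ‖q ^ 2‖ < 1 := by rw [norm_pow]; exact pow_lt_one₀ (norm_nonneg _) hq (by omega)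
  induction n with
  | zero =>
    have h := hasSum_single (f := fun k : ℤ => qPoch (q ^ 2) (2 * 0) *
        (qPochInv (q ^ 2) (((0 : ℕ) : ℤ) - k) * qPochInv (q ^ 2) (((0 : ℕ) : ℤ) + k)) *
        (q ^ (k ^ 2) * z ^ k)) (0 : ℤ) fun k hk => by
      rcases lt_or_gt_of_ne hk with h | h
      · simp [qPochInv, h]
      · simp [qPochInv, h]
    simpa [qPoch, qPochInv] using h
  | succ n ih =>
    rw [Finset.prod_range_succ]
    have e : (1 + z * q ^ (2 * n + 1)) * (1 + z⁻¹ * q ^ (2 * n + 1)) =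
        (1 + q ^ (4 * n + 2)) + q ^ (2 * n + 1) * z + q ^ (2 * n + 1) * z⁻¹ := by
      field_simp; ring
    have h1 := ih.mul_left (1 + q ^ (4 * n + 2))
    have h2 := (((Equiv.addRight (-1 : ℤ)).hasSum_iff).mpr ih).mul_left (q ^ (2 * n + 1) * z)
    have h3 := (((Equiv.addRight (1 : ℤ)).hasSum_iff).mpr ih).mul_left (q ^ (2 * n + 1) * z⁻¹)
    -- Coefficients satisfy `c (n+1) k = (1 + q^(4n+2)) c n k + q^(2n+1) (c n (k-1) + c n (k+1))`,
    -- which, written with `α = x^(n-k)` and `β = x^(n+k)` for `x = q²`, is a polynomial identity.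
    convert! (h1.add h2).add h3 using 1
    · funext k
      simp only [Function.comp, Equiv.coe_addRight]
      set a : ℤ := n - k with ha
      set b : ℤ := n + k with hb
      have i1 : ((n + 1 : ℕ) : ℤ) - k = a + 1 := by push_cast; omega
      have i2 : ((n + 1 : ℕ) : ℤ) + k = b + 1 := by push_cast; omega
      have i3 : (n : ℤ) - (k + -1) = a + 1 := by omega
      have i4 : (n : ℤ) + (k + -1) = b - 1 := by omega
      have i5 : (n : ℤ) - (k + 1) = a - 1 := by omega
      have i6 : (n : ℤ) + (k + 1) = b + 1 := by omega
      rw [i1, i2, i3, i4, i5, i6, qPochInv_sub_one hx a, qPochInv_sub_one hx b]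
      have ea := qPochInv_sub_one hx (a + 1)
      have eb := qPochInv_sub_one hx (b + 1)
      rw [add_sub_cancel_right] at ea eb
      rw [ea, eb]
      have p1 : qPoch (q ^ 2) (2 * (n + 1)) = qPoch (q ^ 2) (2 * n) *
          (1 - (q ^ 2) ^ (2 * n + 1)) * (1 - (q ^ 2) ^ (2 * n + 2)) := by
        rw [show 2 * (n + 1) = 2 * n + 1 + 1 by ring, qPoch, Finset.prod_range_succ,
          Finset.prod_range_succ, qPoch]
      rw [p1]
      have s1 : q ^ ((k + -1) ^ 2) * q ^ (2 * n + 1) = q ^ (k ^ 2) * (q ^ 2 * (q ^ 2) ^ a) := by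
        rw [← zpow_natCast q (2 * n + 1), ← zpow_natCast q 2, ← zpow_mul, ← zpow_add₀ hq0,
          ← zpow_add₀ hq0, ← zpow_add₀ hq0]
        congr 1; rw [ha]; push_cast; ring
      have s2 : q ^ ((k + 1) ^ 2) * q ^ (2 * n + 1) = q ^ (k ^ 2) * (q ^ 2 * (q ^ 2) ^ b) := by
        rw [← zpow_natCast q (2 * n + 1), ← zpow_natCast q 2, ← zpow_mul, ← zpow_add₀ hq0,
          ← zpow_add₀ hq0, ← zpow_add₀ hq0]
        congr 1; rw [hb]; push_cast; ring
      have s3 : q ^ (4 * n) = (q ^ 2) ^ a * (q ^ 2) ^ b := by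
        rw [← zpow_natCast q (4 * n), ← zpow_natCast q 2, ← zpow_mul, ← zpow_mul,
          ← zpow_add₀ hq0]
        congr 1; rw [ha, hb]; push_cast; ring
      have s4 : z ^ (k + -1) = z ^ k * z⁻¹ := by rw [zpow_add₀ hz]; simp
      have s5 : z ^ (k + 1) = z ^ k * z := by rw [zpow_add₀ hz]; simp
      have s6 : (q ^ 2) ^ (a + 1) = (q ^ 2) ^ a * q ^ 2 := zpow_add_one₀ (pow_ne_zero 2 hq0) a
      have s7 : (q ^ 2) ^ (b + 1) = (q ^ 2) ^ b * q ^ 2 := zpow_add_one₀ (pow_ne_zero 2 hq0) b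
      have s8 : (q ^ 2) ^ (2 * n + 1) = (q ^ 2) ^ a * (q ^ 2) ^ b * q ^ 2 := by rw [← s3]; ring
      have s9 : (q ^ 2) ^ (2 * n + 2) = (q ^ 2) ^ a * (q ^ 2) ^ b * q ^ 4 := by rw [← s3]; ring
      have s10 : q ^ (4 * n + 2) = (q ^ 2) ^ a * (q ^ 2) ^ b * q ^ 2 := by rw [← s3]; ring
      rw [s4, s5, s6, s7, s8, s9, s10]
      generalize qPochInv (q ^ 2) (a + 1) = A at *
      generalize qPochInv (q ^ 2) (b + 1) = B at *
      generalize (q ^ 2) ^ a = α at *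
      generalize (q ^ 2) ^ b = β at *
      generalize qPoch (q ^ 2) (2 * n) = P at *
      have zz : z * z⁻¹ = 1 := mul_inv_cancel₀ hz
      linear_combination (-(P * A * B * (1 - β) * (1 - β * q ^ 2) * z ^ k) * z * z⁻¹) * s1
        - (P * A * B * (1 - α) * (1 - α * q ^ 2) * z ^ k * z * z⁻¹) * s2
        - (P * A * B * (1 - β) * (1 - β * q ^ 2) * z ^ k * q ^ (k ^ 2) * (q ^ 2 * α) +
          P * A * B * (1 - α) * (1 - α * q ^ 2) * z ^ k * q ^ (k ^ 2) * (q ^ 2 * β)) * zz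
    · rw [e]; ring

/-- The Jacobi triple product, the limit of its finite form by dominated convergence. The infinite
product in `z` is replaced by any limit `L` of its partial products. -/
lemma jacobi_triple {q : ℂ} (hq : ‖q‖ < 1) (hq0 : q ≠ 0) {z : ℂ} (hz : z ≠ 0)
    (hs : Summable fun k : ℤ => ‖q ^ (k ^ 2) * z ^ k‖) {L : ℂ}
    (hL : Tendsto (fun n : ℕ => ∏ j ∈ Finset.range n,
      ((1 + z * q ^ (2 * j + 1)) * (1 + z⁻¹ * q ^ (2 * j + 1)))) atTop (𝓝 L)) :
    ∑' k : ℤ, q ^ (k ^ 2) * z ^ k = eulerProd (q ^ 2) * L := by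
  have hx : ‖q ^ 2‖ < 1 := by rw [norm_pow]; exact pow_lt_one₀ (norm_nonneg _) hq (by omega)
  have hE := eulerProd_ne_zero hx
  obtain ⟨C, hC⟩ := exists_bound_qPochInv hx
  have hC0 : 0 ≤ C := (norm_nonneg _).trans (hC 0)
  have hcast : Tendsto (fun n : ℕ => (n : ℤ)) atTop atTop := tendsto_natCast_atTop_atTop
  have h1 : Tendsto (fun n : ℕ => ∑' k : ℤ, (qPochInv (q ^ 2) (n - k) *
      qPochInv (q ^ 2) (n + k)) * (q ^ (k ^ 2) * z ^ k)) atTop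
      (𝓝 (∑' k : ℤ, ((eulerProd (q ^ 2))⁻¹ * (eulerProd (q ^ 2))⁻¹) * (q ^ (k ^ 2) * z ^ k))) := by
    refine tendsto_tsum_of_dominated_convergence (hs.mul_left (C * C)) (fun k => ?_)
      (Eventually.of_forall fun n k => ?_)
    · refine Tendsto.mul_const _ (Tendsto.mul ?_ ?_)
      · exact (tendsto_qPochInv hx).comp (tendsto_atTop_add_const_right _ (-k) hcast)
      · exact (tendsto_qPochInv hx).comp (tendsto_atTop_add_const_right _ k hcast)
    · rw [norm_mul, norm_mul]
      gcongr
      · exact hC _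
      · exact hC _
  have h2 : Tendsto (fun n : ℕ => qPoch (q ^ 2) (2 * n)) atTop (𝓝 (eulerProd (q ^ 2))) :=
    (tendsto_qPoch hx).comp (tendsto_id.const_mul_atTop' (by norm_num))
  have h3 := tendsto_nhds_unique hL ((h2.mul h1).congr fun n => by
    rw [← (hasSum_finite_triple hq hq0 hz n).tsum_eq, ← tsum_mul_left]
    simp only [mul_assoc])
  rw [h3, tsum_mul_left]
  field_simp

/-! ### Theta series and their product formulas -/

lemma summable_int_pow_mul {r : ℝ} (h0 : 0 ≤ r) (h1 : r < 1) (j : ℕ) :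
    Summable fun k : ℤ => (k.natAbs : ℝ) ^ j * r ^ k.natAbs := by
  have h := summable_pow_mul_geometric_of_norm_lt_one j (r := r)
    (by rwa [Real.norm_of_nonneg h0])
  exact Summable.of_nat_of_neg (by simpa using h) (by simpa using h)

lemma zpow_sq_eq (q : ℂ) (k : ℤ) : q ^ (k ^ 2) = q ^ (k.natAbs ^ 2) := by
  rw [← zpow_natCast]; simp

lemma pow_natAbs_sq_le {r : ℝ} (h0 : 0 ≤ r) (h1 : r < 1) (k : ℤ) :
    r ^ (k.natAbs ^ 2) ≤ r ^ k.natAbs :=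
  pow_le_pow_of_le_one h0 h1.le (Nat.le_self_pow (by norm_num) _)

lemma summable_norm_theta {q : ℂ} (hq : ‖q‖ < 1) :
    Summable fun k : ℤ => ‖q ^ (k.natAbs ^ 2)‖ := by
  refine Summable.of_nonneg_of_le (fun _ => norm_nonneg _) (fun k => ?_)
    (summable_int_pow_mul (norm_nonneg q) hq 0)
  rw [norm_pow, pow_zero, one_mul]
  exact pow_natAbs_sq_le (norm_nonneg _) hq k

lemma summable_norm_theta_deriv {q : ℂ} (hq : ‖q‖ < 1) :
    Summable fun k : ℤ => ‖(k : ℂ) ^ 2 * q ^ (k.natAbs ^ 2)‖ := by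
  refine Summable.of_nonneg_of_le (fun _ => norm_nonneg _) (fun k => ?_)
    (summable_int_pow_mul (norm_nonneg q) hq 2)
  rw [norm_mul, norm_pow, norm_pow]
  refine mul_le_mul (by simp [Nat.cast_natAbs]) (pow_natAbs_sq_le (norm_nonneg _) hq k)
    (by positivity) (by positivity)

lemma summable_norm_psi {q : ℂ} (hq : ‖q‖ < 1) (hq0 : q ≠ 0) :
    Summable fun k : ℤ => ‖q ^ (k ^ 2 + k)‖ := by
  refine Summable.of_nonneg_of_le (fun _ => norm_nonneg _) (fun k => ?_)
    ((summable_int_pow_mul (norm_nonneg q) hq 0).mul_left ‖q‖⁻¹)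
  have h0 : 0 < ‖q‖ := norm_pos_iff.mpr hq0
  rw [norm_zpow, pow_zero, one_mul, ← zpow_natCast, ← zpow_neg_one, ← zpow_add₀ h0.ne']
  refine zpow_le_zpow_right_of_le_one₀ h0 hq.le ?_
  rw [Int.natCast_natAbs]
  rcases abs_cases k with ⟨h, h'⟩ | ⟨h, h'⟩ <;> rw [h] <;> nlinarith [sq_nonneg (k + 1)]

/-- The theta series `φ(q) = ∑_{k ∈ ℤ} q^(k²)`. The exponent is a natural number, so that every term is
a polynomial in `q`, also at `q = 0`. -/
noncomputable def theta (q : ℂ) : ℂ := ∑' k : ℤ, q ^ (k.natAbs ^ 2)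

/-- The theta series `∑_{k ∈ ℤ} q^(k² + k)`, which is twice Ramanujan's `ψ(q²)`. The exponent is an
integer, which is nonnegative for all `k`. -/
noncomputable def psi (q : ℂ) : ℂ := ∑' k : ℤ, q ^ (k ^ 2 + k)

lemma norm_sq_lt {q : ℂ} (hq : ‖q‖ < 1) : ‖q ^ 2‖ < 1 := by
  rw [norm_pow]; exact pow_lt_one₀ (norm_nonneg _) hq (by omega)

/-- Gauss: `φ(-q) = (q; q)_∞² / (q²; q²)_∞`, the triple product at `z = -1`. -/
lemma theta_neg_eq {q : ℂ} (hq : ‖q‖ < 1) (hq0 : q ≠ 0) :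
    theta (-q) * eulerProd (q ^ 2) = eulerProd q ^ 2 := by
  have hx := norm_sq_lt hq
  have hE := eulerProd_ne_zero hx
  have hterm : ∀ k : ℤ, q ^ (k ^ 2) * (-1 : ℂ) ^ k = (-q) ^ (k.natAbs ^ 2) := by
    intro k
    rw [zpow_sq_eq, neg_pow q, mul_comm]
    congr 1
    rcases Int.even_or_odd k with h | h
    · rw [h.neg_one_zpow, Even.neg_one_pow]; simpa [Nat.even_pow] using h
    · rw [h.neg_one_zpow, Odd.neg_one_pow]; exact (Int.natAbs_odd.mpr h).pow
  have hfin : ∀ n, (∏ j ∈ Finset.range n, (1 - q ^ (2 * j + 1))) * qPoch (q ^ 2) n =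
      qPoch q (2 * n) := by
    intro n
    induction n with
    | zero => simp [qPoch]
    | succ n ih =>
      have e1 : qPoch q (2 * (n + 1)) =
          qPoch q (2 * n) * (1 - q ^ (2 * n + 1)) * (1 - q ^ (2 * n + 2)) := by
        rw [show 2 * (n + 1) = 2 * n + 1 + 1 by ring, qPoch, Finset.prod_range_succ,
          Finset.prod_range_succ, qPoch]
      have e2 : qPoch (q ^ 2) (n + 1) = qPoch (q ^ 2) n * (1 - (q ^ 2) ^ (n + 1)) :=
        Finset.prod_range_succ _ _
      rw [e1, e2, ← ih, Finset.prod_range_succ]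
      ring
  have hlim : Tendsto (fun n : ℕ => ∏ j ∈ Finset.range n, (1 - q ^ (2 * j + 1))) atTop
      (𝓝 (eulerProd q / eulerProd (q ^ 2))) := by
    refine (((tendsto_qPoch hq).comp
      (tendsto_id.const_mul_atTop' (r := 2) (by norm_num))).div (tendsto_qPoch hx) hE).congr
      fun n => ?_
    rw [Pi.div_apply, div_eq_iff (qPoch_ne_zero hx n), hfin]
    rfl
  have := jacobi_triple hq hq0 (z := -1) (by norm_num)
    (by simp_rw [hterm]; exact summable_norm_theta (by simpa using hq))
    ((hlim.mul hlim).congr fun n => by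
      rw [← Finset.prod_mul_distrib]
      refine Finset.prod_congr rfl fun j _ => ?_
      norm_num
      ring)
  simp_rw [hterm] at this
  rw [theta, this]
  field_simp

/-- Gauss: `∑ q^(k² + k) = 2 (q⁴; q⁴)_∞² / (q²; q²)_∞`, the triple product at `z = q`. -/
lemma psi_eq {q : ℂ} (hq : ‖q‖ < 1) (hq0 : q ≠ 0) :
    psi q * eulerProd (q ^ 2) = 2 * eulerProd (q ^ 4) ^ 2 := by
  have hx := norm_sq_lt hq
  have hx2 : ‖q ^ 4‖ < 1 := by
    rw [norm_pow]; exact pow_lt_one₀ (norm_nonneg _) hq (by omega)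
  have hE := eulerProd_ne_zero hx
  have hterm : ∀ k : ℤ, q ^ (k ^ 2) * q ^ k = q ^ (k ^ 2 + k) :=
    fun k => (zpow_add₀ hq0 _ _).symm
  have hfin : ∀ n, (∏ j ∈ Finset.range n, (1 + q ^ (2 * j + 2))) * qPoch (q ^ 2) n =
      qPoch (q ^ 4) n := by
    intro n
    rw [qPoch, qPoch, ← Finset.prod_mul_distrib]
    exact Finset.prod_congr rfl fun j _ => by ring
  have hlim : Tendsto (fun n : ℕ => ∏ j ∈ Finset.range n, (1 + q ^ (2 * j + 2))) atTop
      (𝓝 (eulerProd (q ^ 4) / eulerProd (q ^ 2))) := by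
    refine ((tendsto_qPoch hx2).div (tendsto_qPoch hx) hE).congr fun n => ?_
    rw [Pi.div_apply, div_eq_iff (qPoch_ne_zero hx n), hfin]
  have hfin2 : ∀ n, (∏ j ∈ Finset.range n, (1 + q ^ (2 * j))) * (1 + q ^ (2 * n)) =
      2 * ∏ j ∈ Finset.range n, (1 + q ^ (2 * j + 2)) := by
    intro n
    rw [← Finset.prod_range_succ (fun j => 1 + q ^ (2 * j)), Finset.prod_range_succ', mul_comm]
    norm_num [mul_add]
  have hp : Tendsto (fun n : ℕ => 1 + q ^ (2 * n)) atTop (𝓝 1) := by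
    simpa [pow_mul] using (tendsto_pow_atTop_nhds_zero_of_norm_lt_one hx).const_add 1
  have hne : ∀ n : ℕ, 0 < n → 1 + q ^ (2 * n) ≠ 0 := by
    intro n hn h
    have h1 : ‖q ^ (2 * n)‖ < 1 := by
      rw [norm_pow]; exact pow_lt_one₀ (norm_nonneg _) hq (by omega)
    rw [← neg_eq_of_add_eq_zero_right h] at h1
    simp at h1
  have hlim2 : Tendsto (fun n : ℕ => ∏ j ∈ Finset.range n, (1 + q ^ (2 * j))) atTop
      (𝓝 (2 * (eulerProd (q ^ 4) / eulerProd (q ^ 2)) / 1)) := by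
    refine ((hlim.const_mul 2).div hp one_ne_zero).congr' ?_
    filter_upwards [eventually_gt_atTop 0] with n hn
    rw [Pi.div_apply, div_eq_iff (hne n hn), hfin2]
  have := jacobi_triple hq hq0 (z := q) hq0
    (by simp_rw [hterm]; exact summable_norm_psi hq hq0) ((hlim.mul hlim2).congr fun n => by
      rw [← Finset.prod_mul_distrib]
      refine Finset.prod_congr rfl fun j _ => ?_
      rw [pow_succ q (2 * j)]
      field_simp
      ring)
  simp_rw [hterm] at this
  rw [psi, this]
  field_simp

lemma theta_zero : theta 0 = 1 := by
  rw [theta, tsum_eq_single 0]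
  · simp
  · intro k hk; simpa using hk

lemma theta_ne_zero {q : ℂ} (hq : ‖q‖ < 1) : theta q ≠ 0 := by
  rcases eq_or_ne q 0 with rfl | h0
  · simp [theta_zero]
  · have h := theta_neg_eq (q := -q) (by simpa using hq) (by simpa using h0)
    rw [neg_neg] at h
    intro h1
    rw [h1, zero_mul] at h
    exact pow_ne_zero 2 (eulerProd_ne_zero (x := -q) (by simpa using hq)) h.symm

lemma psi_ne_zero {q : ℂ} (hq : ‖q‖ < 1) (hq0 : q ≠ 0) : psi q ≠ 0 := by
  intro h1
  have h := psi_eq hq hq0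
  rw [h1, zero_mul] at h
  have hx2 : ‖q ^ 4‖ < 1 := by
    rw [norm_pow]; exact pow_lt_one₀ (norm_nonneg _) hq (by omega)
  simpa [eulerProd_ne_zero hx2] using h.symm

/-! ### The derivative of the theta series -/

lemma differentiableOn_theta : DifferentiableOn ℂ theta (Metric.ball 0 1) := by
  intro q hq
  obtain ⟨r, h1, h2⟩ := exists_between (mem_ball_zero_iff.mp hq)
  have hr : 0 ≤ r := (norm_nonneg _).trans h1.le
  have := Complex.differentiableOn_tsum_of_summable_norm (U := Metric.ball (0 : ℂ) r)
    (F := fun (k : ℤ) (w : ℂ) => w ^ (k.natAbs ^ 2)) (u := fun k : ℤ => r ^ (k.natAbs ^ 2))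
    (by simpa [abs_of_nonneg hr] using
      summable_norm_theta (q := (r : ℂ)) (by simpa [abs_of_nonneg hr] using h2))
    (fun k => by fun_prop) Metric.isOpen_ball
    (fun k w hw => by rw [norm_pow]; gcongr; exact (mem_ball_zero_iff.mp hw).le)
  exact (this.differentiableAt
    (Metric.isOpen_ball.mem_nhds (mem_ball_zero_iff.mpr h1))).differentiableWithinAt

lemma hasDerivAt_theta {q : ℂ} (hq : ‖q‖ < 1) : HasDerivAt theta (deriv theta q) q :=
  (differentiableOn_theta.differentiableAt
    (Metric.isOpen_ball.mem_nhds (mem_ball_zero_iff.mpr hq))).hasDerivAt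

lemma hasSum_deriv_theta {q : ℂ} (hq : ‖q‖ < 1) :
    HasSum (fun k : ℤ => ((k.natAbs ^ 2 : ℕ) : ℂ) * q ^ (k.natAbs ^ 2 - 1)) (deriv theta q) := by
  obtain ⟨r, h1, h2⟩ := exists_between hq
  have hr : 0 ≤ r := (norm_nonneg _).trans h1.le
  have := Complex.hasSum_deriv_of_summable_norm (U := Metric.ball (0 : ℂ) r) (z := q)
    (F := fun (k : ℤ) (w : ℂ) => w ^ (k.natAbs ^ 2)) (u := fun k : ℤ => r ^ (k.natAbs ^ 2))
    (by simpa [abs_of_nonneg hr] using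
      summable_norm_theta (q := (r : ℂ)) (by simpa [abs_of_nonneg hr] using h2))
    (fun k => by fun_prop) Metric.isOpen_ball
    (fun k w hw => by rw [norm_pow]; gcongr; exact (mem_ball_zero_iff.mp hw).le)
    (mem_ball_zero_iff.mpr h1)
  simp only [deriv_pow_field] at this
  exact this

lemma mul_deriv_theta {q : ℂ} (hq : ‖q‖ < 1) :
    q * deriv theta q = ∑' k : ℤ, (k : ℂ) ^ 2 * q ^ (k.natAbs ^ 2) := by
  rw [← (hasSum_deriv_theta hq).tsum_eq, ← tsum_mul_left]
  refine tsum_congr fun k => ?_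
  rcases eq_or_ne k 0 with rfl | hk
  · simp
  · have h : k.natAbs ^ 2 - 1 + 1 = k.natAbs ^ 2 :=
      Nat.sub_add_cancel (Nat.one_le_pow _ _ (Int.natAbs_pos.mpr hk))
    have h' : ((k.natAbs ^ 2 : ℕ) : ℂ) = (k : ℂ) ^ 2 := by
      have := Int.natAbs_sq k
      rw [← Int.cast_natCast, Nat.cast_pow, this, Int.cast_pow]
    rw [h']
    nth_rewrite 2 [← h]
    rw [pow_succ]
    ring

lemma deriv_theta_zero : deriv theta 0 = 2 := by
  rw [← (hasSum_deriv_theta (q := 0) (by simp)).tsum_eq,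
    tsum_eq_sum (s := ({1, -1} : Finset ℤ))]
  · rw [Finset.sum_pair (by norm_num)]; norm_num
  · intro k hk
    have hk1 : k.natAbs ≠ 1 := by
      intro h
      simp only [Finset.mem_insert, Finset.mem_singleton] at hk
      omega
    rcases Nat.eq_zero_or_pos k.natAbs with h | h
    · simp [h]
    · have : k.natAbs ^ 2 - 1 ≠ 0 := by
        have : 2 ≤ k.natAbs := by omega
        have : 2 ^ 2 ≤ k.natAbs ^ 2 := Nat.pow_le_pow_left this 2
        omega
      simp [this]

/-! ### Quadratic relations between theta series -/

lemma theta_mul_theta {a b : ℂ} (ha : ‖a‖ < 1) (hb : ‖b‖ < 1) :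
    HasSum (fun p : ℤ × ℤ => a ^ (p.1 ^ 2) * b ^ (p.2 ^ 2)) (theta a * theta b) := by
  simp only [zpow_sq_eq]
  rw [theta, theta, tsum_mul_tsum_of_summable_norm (summable_norm_theta ha)
    (summable_norm_theta hb)]
  exact (summable_mul_of_summable_norm (summable_norm_theta ha) (summable_norm_theta hb)).hasSum

lemma psi_mul_psi {a : ℂ} (ha : ‖a‖ < 1) (ha0 : a ≠ 0) :
    HasSum (fun p : ℤ × ℤ => a ^ (p.1 ^ 2 + p.1) * a ^ (p.2 ^ 2 + p.2)) (psi a * psi a) := by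
  have h := summable_norm_psi ha ha0
  rw [psi, tsum_mul_tsum_of_summable_norm h h]
  exact (summable_mul_of_summable_norm h h).hasSum

/-- A sum supported on pairs with even sum, parametrized by `(a, b) = (u + v, u - v)`. -/
lemma hasSum_even {f : ℤ × ℤ → ℂ} {s : ℂ} (hf : HasSum f s)
    (h : ∀ a b : ℤ, Odd (a + b) → f (a, b) = 0) :
    HasSum (fun p : ℤ × ℤ => f (p.1 + p.2, p.1 - p.2)) s := by
  have hinj : Function.Injective (fun p : ℤ × ℤ => (p.1 + p.2, p.1 - p.2)) := by
    rintro ⟨a, b⟩ ⟨c, d⟩ h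
    simp only [Prod.mk.injEq] at h ⊢
    omega
  refine (hinj.hasSum_iff ?_).mpr hf
  rintro ⟨a, b⟩ hx
  refine h a b (Int.not_even_iff_odd.mp fun ⟨c, hc⟩ => hx ⟨(c, a - c), ?_⟩)
  simp only [Prod.mk.injEq]
  omega

/-- A sum supported on pairs with odd sum, parametrized by `(a, b) = (u + v + 1, u - v)`. -/
lemma hasSum_odd {f : ℤ × ℤ → ℂ} {s : ℂ} (hf : HasSum f s)
    (h : ∀ a b : ℤ, Even (a + b) → f (a, b) = 0) :
    HasSum (fun p : ℤ × ℤ => f (p.1 + p.2 + 1, p.1 - p.2)) s := by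
  have hinj : Function.Injective (fun p : ℤ × ℤ => (p.1 + p.2 + 1, p.1 - p.2)) := by
    rintro ⟨a, b⟩ ⟨c, d⟩ h
    simp only [Prod.mk.injEq] at h ⊢
    omega
  refine (hinj.hasSum_iff ?_).mpr hf
  rintro ⟨a, b⟩ hx
  refine h a b (Int.not_odd_iff_even.mp fun ⟨c, hc⟩ => hx ⟨(c, a - c - 1), ?_⟩)
  simp only [Prod.mk.injEq]
  omega

lemma neg_zpow_sq (q : ℂ) (k : ℤ) : (-q) ^ (k ^ 2) = (-1) ^ k * q ^ (k ^ 2) := by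
  rw [neg_eq_neg_one_mul, mul_zpow]
  congr 1
  rcases Int.even_or_odd k with h | h
  · rw [h.neg_one_zpow, Even.neg_one_zpow]; simpa [Int.even_pow] using h
  · rw [h.neg_one_zpow, Odd.neg_one_zpow]; exact h.pow

lemma zpow_rot {q : ℂ} (hq0 : q ≠ 0) (u v : ℤ) :
    q ^ ((u + v) ^ 2) * q ^ ((u - v) ^ 2) = (q ^ 2) ^ (u ^ 2) * (q ^ 2) ^ (v ^ 2) := by
  rw [← zpow_natCast q 2, ← zpow_mul, ← zpow_mul, ← zpow_add₀ hq0, ← zpow_add₀ hq0]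
  congr 1; push_cast; ring

lemma neg_one_zpow_mul (a b : ℤ) : (-1 : ℂ) ^ a * (-1) ^ b = (-1) ^ (a + b) :=
  (zpow_add₀ (by norm_num) a b).symm

lemma theta_sq_add {q : ℂ} (hq : ‖q‖ < 1) (hq0 : q ≠ 0) :
    theta q ^ 2 + theta (-q) ^ 2 = 2 * theta (q ^ 2) ^ 2 := by
  have hn : ‖-q‖ < 1 := by simpa using hq
  have h := hasSum_even ((theta_mul_theta hq hq).add (theta_mul_theta hn hn)) (by
    intro a b hab
    simp only [neg_zpow_sq]
    have := neg_one_zpow_mul a b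
    rw [hab.neg_one_zpow] at this
    linear_combination (q ^ a ^ 2 * q ^ b ^ 2) * this)
  have h' := (theta_mul_theta (norm_sq_lt hq) (norm_sq_lt hq)).mul_left 2
  rw [sq, sq, sq]
  refine h.unique ?_
  convert! h' using 2 with p
  simp only [neg_zpow_sq]
  have e := neg_one_zpow_mul (p.1 + p.2) (p.1 - p.2)
  rw [Even.neg_one_zpow (n := p.1 + p.2 + (p.1 - p.2)) ⟨p.1, by ring⟩] at e
  linear_combination 2 * zpow_rot hq0 p.1 p.2 +
    (q ^ (p.1 + p.2) ^ 2 * q ^ (p.1 - p.2) ^ 2) * e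

lemma theta_mul_neg {q : ℂ} (hq : ‖q‖ < 1) (hq0 : q ≠ 0) :
    theta q * theta (-q) = theta (-q ^ 2) ^ 2 := by
  have hn : ‖-q‖ < 1 := by simpa using hq
  have hn2 : ‖-q ^ 2‖ < 1 := by simpa using norm_sq_lt hq
  have key : theta q * theta (-q) + theta (-q) * theta q =
      2 * (theta (-q ^ 2) * theta (-q ^ 2)) := by
    have h := hasSum_even ((theta_mul_theta hq hn).add (theta_mul_theta hn hq)) (by
      intro a b hab
      simp only [neg_zpow_sq]
      have h1 := neg_one_zpow_mul a b
      have h2 := neg_one_zpow_mul b b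
      rw [hab.neg_one_zpow] at h1
      rw [Even.neg_one_zpow ⟨b, rfl⟩] at h2
      have : (-1 : ℂ) ^ b + (-1) ^ a = 0 := by
        linear_combination (-1 : ℂ) ^ b * h1 - (-1 : ℂ) ^ a * h2
      linear_combination (q ^ a ^ 2 * q ^ b ^ 2) * this)
    have h' := (theta_mul_theta hn2 hn2).mul_left 2
    refine h.unique ?_
    convert! h' using 2 with p
    simp only [neg_zpow_sq]
    have e1 := neg_one_zpow_mul p.1 p.2
    have e2 : (-1 : ℂ) ^ (p.1 - p.2) = (-1) ^ (p.1 + p.2) := by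
      rw [show p.1 + p.2 = (p.1 - p.2) + (p.2 + p.2) by ring, zpow_add₀ (by norm_num),
        Even.neg_one_zpow (n := p.2 + p.2) ⟨_, rfl⟩, mul_one]
    rw [e2]
    linear_combination 2 * (-1) ^ (p.1 + p.2) * zpow_rot hq0 p.1 p.2 -
      2 * (q ^ 2) ^ (p.1 ^ 2) * (q ^ 2) ^ (p.2 ^ 2) * e1
  linear_combination key / 2

lemma theta_sq_sub {q : ℂ} (hq : ‖q‖ < 1) (hq0 : q ≠ 0) :
    theta q ^ 2 - theta (-q) ^ 2 = 2 * q * psi (q ^ 2) ^ 2 := by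
  have hn : ‖-q‖ < 1 := by simpa using hq
  have h := hasSum_odd ((theta_mul_theta hq hq).sub (theta_mul_theta hn hn)) (by
    intro a b hab
    simp only [neg_zpow_sq]
    have := neg_one_zpow_mul a b
    rw [hab.neg_one_zpow] at this
    linear_combination -(q ^ a ^ 2 * q ^ b ^ 2) * this)
  have h' := (psi_mul_psi (norm_sq_lt hq) (pow_ne_zero 2 hq0)).mul_left (2 * q)
  rw [sq, sq, sq]
  refine h.unique ?_
  convert! h' using 2 with p
  simp only [neg_zpow_sq]
  have e := neg_one_zpow_mul (p.1 + p.2 + 1) (p.1 - p.2)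
  rw [Odd.neg_one_zpow (n := p.1 + p.2 + 1 + (p.1 - p.2)) ⟨p.1, by ring⟩] at e
  have r : q ^ ((p.1 + p.2 + 1) ^ 2) * q ^ ((p.1 - p.2) ^ 2) =
      q * ((q ^ 2) ^ (p.1 ^ 2 + p.1) * (q ^ 2) ^ (p.2 ^ 2 + p.2)) := by
    rw [← zpow_natCast q 2, ← zpow_mul, ← zpow_mul, ← zpow_add₀ hq0, ← zpow_add₀ hq0,
      ← zpow_one_add₀ hq0]
    congr 1; push_cast; ring
  linear_combination 2 * r - (q ^ (p.1 + p.2 + 1) ^ 2 * q ^ (p.1 - p.2) ^ 2) * e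

/-! ### The logarithmic derivative of `φ(q) / φ(-q)` -/

lemma eventually_good {q : ℂ} (hq : ‖q‖ < 1) (hq0 : q ≠ 0) : ∀ᶠ w in 𝓝 q, ‖w‖ < 1 ∧ w ≠ 0 := by
  have h1 : ∀ᶠ w in 𝓝 q, ‖w‖ < 1 := continuous_norm.continuousAt.eventually_lt_const hq
  exact h1.and (isOpen_ne.mem_nhds hq0)

lemma hasDerivAt_theta_neg {q : ℂ} (hq : ‖q‖ < 1) :
    HasDerivAt (fun w => theta (-w)) (-deriv theta (-q)) q := by
  have h := (hasDerivAt_theta (q := -q) (by simpa using hq)).comp q (hasDerivAt_neg q)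
  simpa [Function.comp_def] using h

lemma hasDerivAt_theta_sq {q : ℂ} (hq : ‖q‖ < 1) :
    HasDerivAt (fun w => theta (w ^ 2)) (deriv theta (q ^ 2) * (2 * q)) q := by
  have h := (hasDerivAt_theta (norm_sq_lt hq)).comp q (hasDerivAt_pow 2 q)
  simpa [Function.comp_def] using h

lemma hasDerivAt_theta_neg_sq {q : ℂ} (hq : ‖q‖ < 1) :
    HasDerivAt (fun w => theta (-w ^ 2)) (-deriv theta (-q ^ 2) * (2 * q)) q := by
  have h := (hasDerivAt_theta_neg (norm_sq_lt hq)).comp q (hasDerivAt_pow 2 q)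
  simpa [Function.comp_def] using h

/-- The derivative of `theta_sq_add`. -/
lemma deriv_theta_sq_add {q : ℂ} (hq : ‖q‖ < 1) (hq0 : q ≠ 0) :
    theta q * deriv theta q - theta (-q) * deriv theta (-q) =
      4 * q * theta (q ^ 2) * deriv theta (q ^ 2) := by
  have h1 := ((hasDerivAt_theta hq).fun_pow 2).fun_add ((hasDerivAt_theta_neg hq).fun_pow 2)
  have h2 := ((hasDerivAt_theta_sq hq).fun_pow 2).const_mul 2
  have h3 := h1.unique (h2.congr_of_eventuallyEq
    ((eventually_good hq hq0).mono fun w hw => theta_sq_add hw.1 hw.2))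
  norm_num at h3
  linear_combination h3 / 2

/-- The derivative of `theta_mul_neg`. -/
lemma deriv_theta_mul_neg {q : ℂ} (hq : ‖q‖ < 1) (hq0 : q ≠ 0) :
    deriv theta q * theta (-q) - theta q * deriv theta (-q) =
      -(4 * q * theta (-q ^ 2) * deriv theta (-q ^ 2)) := by
  have h1 := (hasDerivAt_theta hq).fun_mul (hasDerivAt_theta_neg hq)
  have h2 := (hasDerivAt_theta_neg_sq hq).fun_pow 2
  have h3 := h1.unique (h2.congr_of_eventuallyEq
    ((eventually_good hq hq0).mono fun w hw => theta_mul_neg hw.1 hw.2))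
  norm_num at h3
  linear_combination h3

/-- The logarithmic derivative (with respect to `q`) of `φ(q) / φ(-q)`. -/
noncomputable def logDer (q : ℂ) : ℂ := deriv theta q / theta q + deriv theta (-q) / theta (-q)

/-- The function `(φ(q)⁴ - φ(-q)⁴) / 4`, the value of `q · logDer q` by `mul_logDer_eq`. -/
noncomputable def quartic (q : ℂ) : ℂ := (theta q ^ 4 - theta (-q) ^ 4) / 4

lemma quartic_ne_zero {q : ℂ} (hq : ‖q‖ < 1) (hq0 : q ≠ 0) : quartic q ≠ 0 := by
  have e : quartic q = (theta q ^ 2 + theta (-q) ^ 2) * (theta q ^ 2 - theta (-q) ^ 2) / 4 := by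
    rw [quartic]; ring
  rw [e, theta_sq_add hq hq0, theta_sq_sub hq hq0]
  have h1 := theta_ne_zero (norm_sq_lt hq)
  have h2 := psi_ne_zero (norm_sq_lt hq) (pow_ne_zero 2 hq0)
  simp [h1, h2, hq0]

/-- The relations `φ(q)² + φ(-q)² = 2 φ(q²)²` and `φ(q) φ(-q) = φ(-q²)²` and their derivatives show
that `q · logDer q` and `quartic q` get multiplied by the same factor
`(φ(q)² - φ(-q)²) / (4 (φ(q)² + φ(-q)²))` when `q` is replaced by `q²`. -/
lemma ratio_sq {q : ℂ} (hq : ‖q‖ < 1) (hq0 : q ≠ 0) :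
    q ^ 2 * logDer (q ^ 2) / quartic (q ^ 2) = q * logDer q / quartic q := by
  have hn : ‖-q‖ < 1 := by simpa using hq
  have hx := norm_sq_lt hq
  have hxn : ‖-q ^ 2‖ < 1 := by simpa using hx
  rw [div_eq_div_iff (quartic_ne_zero hx (pow_ne_zero 2 hq0)) (quartic_ne_zero hq hq0)]
  have hA := theta_ne_zero hq
  have hB := theta_ne_zero hn
  have hA1 := theta_ne_zero hx
  have hB1 := theta_ne_zero hxn
  have s := theta_sq_add hq hq0
  have m := theta_mul_neg hq hq0
  have ds := deriv_theta_sq_add hq hq0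
  have dm := deriv_theta_mul_neg hq hq0
  unfold logDer quartic
  generalize theta q = A at *
  generalize theta (-q) = B at *
  generalize theta (q ^ 2) = A₁ at *
  generalize theta (-q ^ 2) = B₁ at *
  generalize deriv theta q = a at *
  generalize deriv theta (-q) = b at *
  generalize deriv theta (q ^ 2) = a₁ at *
  generalize deriv theta (-q ^ 2) = b₁ at *
  have hs : A ^ 2 + B ^ 2 ≠ 0 := by rw [s]; simpa using hA1
  have e1 : a₁ / A₁ = (A * a - B * b) / (2 * q * (A ^ 2 + B ^ 2)) := by
    rw [s, ds]; field_simp; norm_num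
  have e2 : b₁ / B₁ = -(a * B - A * b) / (4 * q * (A * B)) := by
    rw [m, dm]; field_simp
  have e3 : A₁ ^ 4 = ((A ^ 2 + B ^ 2) / 2) ^ 2 := by rw [s]; ring
  have e4 : B₁ ^ 4 = (A * B) ^ 2 := by rw [m]; ring
  rw [e1, e2, e3, e4]
  field_simp
  ring

/-- Both `logDer q` and `quartic q / q` tend to `4` as `q → 0`, because `φ(q) = 1 + 2 q + O(q⁴)`. -/
lemma tendsto_ratio : Tendsto (fun q => q * logDer q / quartic q) (𝓝[≠] 0) (𝓝 1) := by
  have hball : Metric.ball (0 : ℂ) 1 ∈ 𝓝 0 := Metric.ball_mem_nhds _ one_pos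
  have hc : ContinuousAt (deriv theta) 0 :=
    ((differentiableOn_theta.deriv Metric.isOpen_ball).differentiableAt hball).continuousAt
  have hc0 : ContinuousAt theta 0 := (hasDerivAt_theta (q := 0) (by simp)).continuousAt
  have hq : ContinuousAt (fun q : ℂ => deriv theta q / theta q) 0 :=
    hc.div hc0 (by simp [theta_zero])
  have hneg : Tendsto (fun q : ℂ => -q) (𝓝 0) (𝓝 0) := by
    simpa using (continuous_neg (G := ℂ)).tendsto 0
  have h1 : Tendsto logDer (𝓝 0) (𝓝 4) := by
    have h := hq.tendsto.add (hq.tendsto.comp hneg)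
    norm_num [theta_zero, deriv_theta_zero] at h
    exact h
  have h2 : HasDerivAt quartic 4 0 := by
    have h0 : HasDerivAt theta 2 0 := by
      have := hasDerivAt_theta (q := 0) (by simp)
      rwa [deriv_theta_zero] at this
    have hm : HasDerivAt (fun w => theta (-w)) (-2) 0 := by
      have := hasDerivAt_theta_neg (q := 0) (by simp)
      rwa [neg_zero, deriv_theta_zero] at this
    have h := ((h0.fun_pow 4).fun_sub (hm.fun_pow 4)).div_const 4
    norm_num [theta_zero] at h
    exact h
  have h3 := hasDerivAt_iff_tendsto_slope_zero.mp h2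
  have h4 := (h1.mono_left nhdsWithin_le_nhds).div h3 (by norm_num)
  rw [div_self (by norm_num)] at h4
  refine h4.congr' ?_
  filter_upwards [self_mem_nhdsWithin] with q (hq : q ≠ 0)
  have : quartic 0 = 0 := by simp [quartic]
  simp only [Pi.div_apply, zero_add, this, sub_zero, smul_eq_mul]
  field_simp

/-- The ratio of the two sides is invariant under `q ↦ q²`, hence equal to its limit `1` at `q = 0`. -/
lemma mul_logDer_eq {q : ℂ} (hq : ‖q‖ < 1) (hq0 : q ≠ 0) : q * logDer q = quartic q := by
  have hit : ∀ n : ℕ, ‖q ^ 2 ^ n‖ < 1 ∧ q ^ 2 ^ n * logDer (q ^ 2 ^ n) / quartic (q ^ 2 ^ n) =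
      q * logDer q / quartic q := by
    intro n
    induction n with
    | zero => simpa using hq
    | succ n ih =>
      rw [pow_succ 2 n, pow_mul]
      exact ⟨norm_sq_lt ih.1, (ratio_sq ih.1 (pow_ne_zero _ hq0)).trans ih.2⟩
  have ht : Tendsto (fun n : ℕ => q ^ 2 ^ n) atTop (𝓝[≠] 0) := by
    refine tendsto_nhdsWithin_iff.mpr ⟨?_, Eventually.of_forall fun n => pow_ne_zero _ hq0⟩
    exact (tendsto_pow_atTop_nhds_zero_of_norm_lt_one hq).comp
      (tendsto_pow_atTop_atTop_of_one_lt (by norm_num))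
  have h := tendsto_nhds_unique
    ((tendsto_ratio.comp ht).congr fun n => (hit n).2) tendsto_const_nhds
  exact (div_eq_one_iff_eq (quartic_ne_zero hq hq0)).mp h.symm

/-- The Wronskian of `φ(q)` and `φ(q²)` for the derivation `q d/dq`, as a product of Euler products. -/
lemma wronskian_eq {q : ℂ} (hq : ‖q‖ < 1) (hq0 : q ≠ 0) :
    q * deriv theta q * theta (q ^ 2) - 2 * theta q * (q ^ 2 * deriv theta (q ^ 2)) =
      2 * (q * eulerProd q ^ 2 * eulerProd (q ^ 2) * eulerProd (q ^ 4) * eulerProd (q ^ 8) ^ 2) := by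
  have hx := norm_sq_lt hq
  have hx0 := pow_ne_zero 2 hq0
  have hn : ‖-q‖ < 1 := by simpa using hq
  have hy : ‖q ^ 4‖ < 1 := by
    rw [norm_pow]; exact pow_lt_one₀ (norm_nonneg _) hq (by omega)
  have hw : ‖q ^ 8‖ < 1 := by
    rw [norm_pow]; exact pow_lt_one₀ (norm_nonneg _) hq (by omega)
  have hA := theta_ne_zero hq
  have hB := theta_ne_zero hn
  have hA1 := theta_ne_zero hx
  have s := theta_sq_add hq hq0
  have d := theta_sq_sub hq hq0
  have m := theta_mul_neg hq hq0
  have m1 := theta_mul_neg hx hx0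
  have ds := deriv_theta_sq_add hq hq0
  have w := mul_logDer_eq hq hq0
  have p0 := theta_neg_eq hq hq0
  have p1 := theta_neg_eq hx hx0
  have p2 := theta_neg_eq hy (pow_ne_zero 4 hq0)
  have p3 := psi_eq hx hx0
  have n2 := eulerProd_ne_zero hx
  have n4 := eulerProd_ne_zero hy
  have n8 := eulerProd_ne_zero hw
  rw [logDer, quartic] at w
  simp only [← pow_mul, Nat.reduceMul] at m1 p1 p2 p3
  -- Since `φ(q²)² = (A² + B²) / 2` with `A = φ(q)` and `B = φ(-q)`, the Wronskian is a multiple of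
  -- `D log (A / B)`, known from `mul_logDer_eq`; the rest are the quadratic relations.
  have key : q * deriv theta q * theta (q ^ 2) - 2 * theta q * (q ^ 2 * deriv theta (q ^ 2)) =
      q / 2 * (theta (-q) * theta (-q ^ 2)) * theta (-q ^ 4) ^ 2 * psi (q ^ 2) ^ 2 := by
    rw [← m1]
    generalize theta q = A at *
    generalize theta (-q) = B at *
    generalize theta (q ^ 2) = A₁ at *
    generalize theta (-q ^ 2) = B₁ at *
    generalize deriv theta q = a at *
    generalize deriv theta (-q) = b at *
    generalize deriv theta (q ^ 2) = a₁ at *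
    generalize psi (q ^ 2) = P at *
    have w' : q * (a * B + b * A) = A * B * (A ^ 4 - B ^ 4) / 4 := by
      field_simp at w
      linear_combination w / 4
    apply mul_left_cancel₀ (mul_ne_zero two_ne_zero hA1)
    linear_combination (-q * a) * s + q * A * ds + B * w' + (q * A₁ ^ 2 * B * P ^ 2) * m +
      (A * B ^ 2 / 4) * (A ^ 2 + B ^ 2) * d + (A * B ^ 2 / 2) * q * P ^ 2 * s
  have t0 := (eq_div_iff n2).mpr p0
  have t1 := (eq_div_iff n4).mpr p1
  have t2 := (eq_div_iff n8).mpr p2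
  have t3 := (eq_div_iff n4).mpr p3
  rw [key, t0, t1, t2, t3]
  field_simp

lemma dedekindEta_eq (τ : ℂ) :
    dedekindEta τ = Complex.exp (π * Complex.I * τ / 12) *
      eulerProd (Complex.exp (2 * π * Complex.I * τ)) := by
  rw [dedekindEta, eulerProd]
  congr 1
  refine tprod_congr fun n => ?_
  rw [← Complex.exp_nat_mul]
  congr 2
  push_cast
  ring

theorem eta_product_eq_theta_series (τ : ℂ) (hτ : 0 < τ.im) :
    Summable (fun p : ℤ × ℤ =>
      ((p.1 : ℂ) ^ 2 - 2 * (p.2 : ℂ) ^ 2) *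
        Complex.exp (2 * π * Complex.I * τ * ((p.1 : ℂ) ^ 2 + 2 * (p.2 : ℂ) ^ 2))) ∧
    dedekindEta τ ^ 2 * dedekindEta (2 * τ) * dedekindEta (4 * τ) *
        dedekindEta (8 * τ) ^ 2 =
      (1 / 2 : ℂ) * ∑' p : ℤ × ℤ,
        (((p.1 : ℂ) ^ 2 - 2 * (p.2 : ℂ) ^ 2) *
          Complex.exp (2 * π * Complex.I * τ * ((p.1 : ℂ) ^ 2 + 2 * (p.2 : ℂ) ^ 2))) := by
  set q := Complex.exp (2 * π * Complex.I * τ) with hqdef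
  have hq0 : q ≠ 0 := Complex.exp_ne_zero _
  have hq : ‖q‖ < 1 := by
    rw [hqdef, Complex.norm_exp, Real.exp_lt_one_iff]
    simp
    positivity
  have hx := norm_sq_lt hq
  have hsq : ∀ k : ℤ, ((k.natAbs ^ 2 : ℕ) : ℂ) = (k : ℂ) ^ 2 := fun k => by
    rw [← Int.cast_natCast, Nat.cast_pow, Int.natAbs_sq, Int.cast_pow]
  have hterm : ∀ p : ℤ × ℤ, ((p.1 : ℂ) ^ 2 - 2 * (p.2 : ℂ) ^ 2) *
      Complex.exp (2 * π * Complex.I * τ * ((p.1 : ℂ) ^ 2 + 2 * (p.2 : ℂ) ^ 2)) =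
      ((p.1 : ℂ) ^ 2 * q ^ (p.1.natAbs ^ 2)) * (q ^ 2) ^ (p.2.natAbs ^ 2) -
        2 * (q ^ (p.1.natAbs ^ 2) * ((p.2 : ℂ) ^ 2 * (q ^ 2) ^ (p.2.natAbs ^ 2))) := by
    intro p
    have : Complex.exp (2 * π * Complex.I * τ * ((p.1 : ℂ) ^ 2 + 2 * (p.2 : ℂ) ^ 2)) =
        q ^ (p.1.natAbs ^ 2) * (q ^ 2) ^ (p.2.natAbs ^ 2) := by
      rw [← pow_mul, ← pow_add, hqdef, ← Complex.exp_nat_mul, Nat.cast_add, Nat.cast_mul, hsq, hsq]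
      congr 1
      push_cast
      ring
    rw [this]
    ring
  -- The double series splits as `(∑ k² q^(k²)) (∑ q^(2m²)) - 2 (∑ q^(k²)) (∑ m² q^(2m²))`.
  have s1 := summable_mul_of_summable_norm (summable_norm_theta_deriv hq) (summable_norm_theta hx)
  have s2 := summable_mul_of_summable_norm (summable_norm_theta hq) (summable_norm_theta_deriv hx)
  have hs := s1.hasSum.sub (s2.hasSum.mul_left 2)
  rw [← tsum_mul_tsum_of_summable_norm (summable_norm_theta_deriv hq) (summable_norm_theta hx),
    ← tsum_mul_tsum_of_summable_norm (summable_norm_theta hq) (summable_norm_theta_deriv hx),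
    ← mul_deriv_theta hq, ← mul_deriv_theta hx] at hs
  simp only [hterm]
  refine ⟨hs.summable, ?_⟩
  rw [hs.tsum_eq]
  have hw := wronskian_eq hq hq0
  simp only [theta] at hw ⊢
  rw [← mul_assoc 2, hw]
  have hpow : ∀ n : ℕ, Complex.exp (2 * π * Complex.I * (n * τ)) = q ^ n := fun n => by
    rw [hqdef, ← Complex.exp_nat_mul]; congr 1; ring
  have h2 := hpow 2
  have h4 := hpow 4
  have h8 := hpow 8
  push_cast at h2 h4 h8
  rw [dedekindEta_eq, dedekindEta_eq, dedekindEta_eq, dedekindEta_eq, h2, h4, h8, ← hqdef]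
  have hexp : Complex.exp (π * Complex.I * τ / 12) ^ 2 *
      Complex.exp (π * Complex.I * (2 * τ) / 12) *
      Complex.exp (π * Complex.I * (4 * τ) / 12) *
      Complex.exp (π * Complex.I * (8 * τ) / 12) ^ 2 = q := by
    rw [← Complex.exp_nat_mul, ← Complex.exp_nat_mul, ← Complex.exp_add, ← Complex.exp_add,
      ← Complex.exp_add, hqdef]
    congr 1
    push_cast
    ring
  rw [← hexp]
  ring
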